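/- arXiv:2208.00917 — 2 statements merged into one kernel-verified Lean document; each statement's English description precedes it below -/
import Mathlib

section
/- Suppose that n is odd and that the subgraph G_{>0} is connected, and that J is ferromagnetic. Then Z_{G,t}(π/2) = 0 for every t ≥ 0, and there exist continuous functions x_1, …, x_{(n−1)/2} : [0,∞) → ℝ such that for every t ≥ 0 one has 0 < x_1(t) < … < x_{(n−1)/2}(t) < π/2 and {x ∈ (0,π/2) : Z_{G,t}(x) = 0} = {x_1(t), …, x_{(n−1)/2}(t)}; moreover, setting x_0(0) := 0 and x_{(n+1)/2}(0) := π/2, for each k ∈ {1, …, (n−1)/2} exactly one of the following three cases occurs: (a) x_k(t) = x_k(0) for every t ∈ [0,∞); (b) x_k is strictly decreasing on [0,∞) and x_k(t) ∈ (x_{k−1}(0), x_k(0)) for every t ∈ (0,∞); (c) x_k is strictly increasing on [0,∞) and x_k(t) ∈ (x_k(0), x_{k+1}(0)) for every t ∈ (0,∞). -/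
open scoped Real

noncomputable def spin (b : Bool) : ℝ := if b then 1 else -1

noncomputable def pairProd {V : Type} (σ : V → Bool) (e : Sym2 V) : ℝ :=
  Sym2.lift ⟨fun u v => spin (σ u) * spin (σ v), fun _ _ => mul_comm _ _⟩ e

/-- The Ising partition function `Z_{G,t}(x)` with an extra coupling `t` at the edge
`u₀v₀`, couplings `J` on the edge set `E`, and (complex) external field `i·x`. -/
noncomputable def IsingZ {V : Type} [Fintype V] [DecidableEq V]
    (E : Finset (Sym2 V)) (J : Sym2 V → ℝ) (u₀ v₀ : V) (t x : ℂ) : ℂ :=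
  ∑ σ : V → Bool, Complex.exp
    (t * ((spin (σ u₀) * spin (σ v₀) : ℝ) : ℂ)
      + ((∑ e ∈ E, J e * pairProd σ e : ℝ) : ℂ)
      + Complex.I * x * ((∑ u, spin (σ u) : ℝ) : ℂ))

/-- Exactly one of three propositions holds. -/
def ExactlyOne (A B C : Prop) : Prop :=
  (A ∧ ¬B ∧ ¬C) ∨ (¬A ∧ B ∧ ¬C) ∨ (¬A ∧ ¬B ∧ C)

/-- The generating polynomial of cuts of `U` with edge activities `a` and vertex activities `z`. -/
noncomputable def cutPoly {V : Type} [DecidableEq V] (a : V → V → ℝ) (U : Finset V)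
    (z : V → ℂ) : ℂ :=
  ∑ S ∈ U.powerset, (∏ u ∈ S, z u) * ∏ u ∈ S, ∏ w ∈ U \ S, (a u w : ℂ)

/-- The variant of `cutPoly` in which the complement of each set carries the field `b`. -/
noncomputable def coCutPoly {V : Type} [DecidableEq V] (a : V → V → ℝ) (b : V → ℝ)
    (U : Finset V) (z : V → ℂ) : ℂ :=
  ∑ S ∈ U.powerset, (∏ u ∈ S, z u) *
    ((∏ w ∈ U \ S, (b w : ℂ)) * ∏ u ∈ S, ∏ w ∈ U \ S, (a u w : ℂ))

section LeeYang

variable {V : Type} [DecidableEq V]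

lemma prod_cut_insert (a : V → V → ℝ) (ha : ∀ u w, a u w = a w u) {U S : Finset V} {v : V}
    (hv : v ∉ U) (hS : S ⊆ U) :
    ∏ u ∈ S, ∏ w ∈ insert v U \ S, (a u w : ℂ) =
      (∏ u ∈ S, (a v u : ℂ)) * ∏ u ∈ S, ∏ w ∈ U \ S, (a u w : ℂ) := by
  have hvS : v ∉ S := fun h => hv (hS h)
  rw [Finset.insert_sdiff_of_notMem _ hvS, ← Finset.prod_mul_distrib]
  refine Finset.prod_congr rfl fun u _ => ?_
  rw [Finset.prod_insert (by grind), ha u v]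

lemma cutPoly_insert (a : V → V → ℝ) (ha : ∀ u w, a u w = a w u) {U : Finset V} {v : V}
    (hv : v ∉ U) (z : V → ℂ) :
    cutPoly a (insert v U) z =
      cutPoly a U (fun u => (a v u : ℂ) * z u) + z v * coCutPoly a (a v) U z := by
  unfold cutPoly coCutPoly
  rw [Finset.sum_powerset_insert hv, Finset.mul_sum]
  congr 1
  · refine Finset.sum_congr rfl fun S hS => ?_
    rw [prod_cut_insert a ha hv (Finset.mem_powerset.1 hS), Finset.prod_mul_distrib]
    ring
  · refine Finset.sum_congr rfl fun S hS => ?_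
    have hS' := Finset.mem_powerset.1 hS
    have hvS : v ∉ S := fun h => hv (hS' h)
    have : insert v U \ insert v S = U \ S := by
      grind
    rw [this, Finset.prod_insert hvS, Finset.prod_insert hvS]
    ring

lemma norm_coCutPoly_of_norm_eq_one (a : V → V → ℝ) (ha : ∀ u w, a u w = a w u) (b : V → ℝ)
    (U : Finset V) (z : V → ℂ) (hz : ∀ u ∈ U, ‖z u‖ = 1) :
    ‖coCutPoly a b U z‖ = ‖cutPoly a U (fun u => (b u : ℂ) * z u)‖ := by
  have key : coCutPoly a b U z
      = (∏ u ∈ U, z u) * (starRingEnd ℂ) (cutPoly a U (fun u => (b u : ℂ) * z u)) := by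
    unfold coCutPoly cutPoly
    rw [map_sum, Finset.mul_sum]
    refine Finset.sum_nbij' (U \ ·) (U \ ·) (by simp) (by simp)
      (fun S hS => by simpa using hS) (fun S hS => by simpa using hS) fun S hS => ?_
    have hS' := Finset.mem_powerset.1 hS
    have hUS : U \ (U \ S) = S := by simpa using hS'
    rw [hUS, map_mul, map_prod, map_prod]
    simp only [map_mul, map_prod, Complex.conj_ofReal, Finset.prod_mul_distrib]
    rw [← Finset.prod_sdiff hS']
    have h1 : (∏ u ∈ U \ S, z u) * ∏ u ∈ U \ S, (starRingEnd ℂ) (z u) = 1 := by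
      rw [← Finset.prod_mul_distrib]
      refine Finset.prod_eq_one fun u hu => ?_
      rw [Complex.mul_conj, Complex.normSq_eq_norm_sq, hz u (Finset.mem_sdiff.1 hu).1]
      simp
    have h2 : ∏ u ∈ S, ∏ w ∈ U \ S, (a u w : ℂ) = ∏ u ∈ U \ S, ∏ w ∈ S, (a u w : ℂ) := by
      rw [Finset.prod_comm]
      exact Finset.prod_congr rfl fun u _ => Finset.prod_congr rfl fun w _ => by rw [ha]
    rw [h2]
    linear_combination (-(∏ u ∈ S, z u) * (∏ w ∈ U \ S, (b w : ℂ)) *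
      ∏ u ∈ U \ S, ∏ w ∈ S, (a u w : ℂ)) * h1
  rw [key, norm_mul, norm_prod, Finset.prod_eq_one hz, one_mul, RCLike.norm_conj]

lemma differentiable_update (z : V → ℂ) (u w : V) :
    Differentiable ℂ fun ζ : ℂ => Function.update z u ζ w := by
  by_cases h : w = u
  · subst h; simp
  · simp [Function.update_of_ne h]

/-- The maximum principle on the polydisc for `coCutPoly / cutPoly`. -/
lemma norm_coCutPoly_le_of_ne_zero (a : V → V → ℝ) (ha : ∀ u w, a u w = a w u) (b : V → ℝ)
    (U : Finset V)
    (hne : ∀ z : V → ℂ, (∀ u ∈ U, ‖z u‖ ≤ 1) → cutPoly a U (fun u => (b u : ℂ) * z u) ≠ 0)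
    (z : V → ℂ) (hz : ∀ u ∈ U, ‖z u‖ ≤ 1) :
    ‖coCutPoly a b U z‖ ≤ ‖cutPoly a U (fun u => (b u : ℂ) * z u)‖ := by
  suffices H : ∀ K : Finset V, ∀ z : V → ℂ, (∀ u ∈ U, ‖z u‖ ≤ 1) →
      (∀ u ∈ U, u ∉ K → ‖z u‖ = 1) →
      ‖coCutPoly a b U z‖ ≤ ‖cutPoly a U (fun u => (b u : ℂ) * z u)‖ from
    H U z hz fun u hu hu' => absurd hu hu'
  intro K
  induction K using Finset.induction_on with
  | empty =>
    intro z _ hz1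
    exact (norm_coCutPoly_of_norm_eq_one a ha b U z fun u hu => hz1 u hu (by simp)).le
  | insert k K _ ih =>
    intro z hz hz1
    by_cases hkU : k ∈ U
    swap
    · exact ih z hz fun u hu hu' => hz1 u hu (by grind)
    set A : ℂ → ℂ := fun ζ => cutPoly a U (fun u => (b u : ℂ) * Function.update z k ζ u)
    set B : ℂ → ℂ := fun ζ => coCutPoly a b U (Function.update z k ζ)
    have hupd : ∀ ζ : ℂ, ‖ζ‖ ≤ 1 → ∀ u ∈ U, ‖Function.update z k ζ u‖ ≤ 1 := by
      intro ζ hζ u hu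
      by_cases h : u = k
      · subst h; simpa
      · simpa [Function.update_of_ne h] using hz u hu
    have hd := differentiable_update z k
    have hA : Differentiable ℂ A := by
      unfold A cutPoly
      fun_prop
    have hB : Differentiable ℂ B := by
      unfold B coCutPoly
      fun_prop
    have hA0 : ∀ ζ : ℂ, ‖ζ‖ ≤ 1 → A ζ ≠ 0 := fun ζ hζ => hne _ (hupd ζ hζ)
    have hquot : ‖B (z k) / A (z k)‖ ≤ 1 := by
      refine Complex.norm_le_of_forall_mem_frontier_norm_le (f := fun ζ => B ζ / A ζ)
        (U := Metric.ball (0 : ℂ) 1) Metric.isBounded_ball ?_ ?_ ?_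
      · refine DifferentiableOn.diffContOnCl fun ζ hζ => ?_
        rw [closure_ball _ one_ne_zero, mem_closedBall_zero_iff] at hζ
        exact ((hB ζ).div (hA ζ) (hA0 ζ hζ)).differentiableWithinAt
      · intro ζ hζ
        rw [frontier_ball _ one_ne_zero, mem_sphere_zero_iff_norm] at hζ
        rw [norm_div, div_le_one (norm_pos_iff.2 (hA0 ζ hζ.le))]
        refine ih _ (hupd ζ hζ.le) fun u hu huK => ?_
        by_cases h : u = k
        · subst h; simpa
        · simpa [Function.update_of_ne h] using hz1 u hu (by grind)
      · rw [closure_ball _ one_ne_zero, mem_closedBall_zero_iff]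
        exact hz k hkU
    rw [norm_div, div_le_one (norm_pos_iff.2 (hA0 _ (hz k hkU)))] at hquot
    simpa [A, B] using hquot

/-- Lee-Yang theorem on the closed polydisc: the cut polynomial does not vanish as soon as every
set of vertices with unimodular activities is joined to its complement. -/
theorem cutPoly_ne_zero (a : V → V → ℝ) (ha : ∀ u w, a u w = a w u) (ha0 : ∀ u w, 0 ≤ a u w)
    (ha1 : ∀ u w, a u w ≤ 1) (U : Finset V) (z : V → ℂ) (hz : ∀ u ∈ U, ‖z u‖ ≤ 1)
    (hcut : ∀ S ⊆ U, S.Nonempty → (∀ u ∈ S, ‖z u‖ = 1) → ∃ u ∈ S, ∃ w ∈ U \ S, a u w ≠ 1) :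
    cutPoly a U z ≠ 0 := by
  induction U using Finset.strongInduction generalizing z with
  | H U ih =>
  rcases U.eq_empty_or_nonempty with rfl | hU
  · simp [cutPoly]
  obtain ⟨v, hvU, hv⟩ : ∃ v ∈ U, ‖z v‖ < 1 := by
    by_contra! h
    obtain ⟨u, _, w, hw, _⟩ := hcut U subset_rfl hU fun u hu => le_antisymm (hz u hu) (h u hu)
    simp at hw
  obtain ⟨U, hvU', rfl⟩ : ∃ U' : Finset V, v ∉ U' ∧ insert v U' = U :=
    ⟨U.erase v, by simp, Finset.insert_erase hvU⟩
  have hlt : U ⊂ insert v U := Finset.ssubset_insert hvU'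
  have hzU : ∀ u ∈ U, ‖z u‖ ≤ 1 := fun u hu => hz u (Finset.mem_insert_of_mem hu)
  have hnorm : ∀ (r : ℝ) (u : V), 0 ≤ r → ‖((r * a v u : ℝ) : ℂ)‖ = r * a v u := fun r u hr => by
    rw [Complex.norm_real, Real.norm_of_nonneg (mul_nonneg hr (ha0 v u))]
  have hA : cutPoly a U (fun u => (a v u : ℂ) * z u) ≠ 0 := by
    have hn : ∀ u ∈ U, ‖(a v u : ℂ) * z u‖ = a v u * ‖z u‖ := fun u _ => by
      simpa using congrArg (· * ‖z u‖) (hnorm 1 u zero_le_one)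
    refine ih U hlt _ (fun u hu => ?_) fun S hS hSne hS1 => ?_
    · rw [hn u hu]
      exact mul_le_one₀ (ha1 v u) (norm_nonneg _) (hzU u hu)
    · have hboth : ∀ u ∈ S, a v u = 1 ∧ ‖z u‖ = 1 := by
        intro u hu
        have h1 := hS1 u hu
        rw [hn u (hS hu)] at h1
        have h2 := ha1 v u
        have h3 := hzU u (hS hu)
        have h4 := ha0 v u
        have h5 := norm_nonneg (z u)
        constructor <;> nlinarith
      obtain ⟨u, hu, w, hw, hne⟩ := hcut S (hS.trans hlt.subset) hSne fun u hu => (hboth u hu).2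
      refine ⟨u, hu, w, ?_, hne⟩
      have hwv : w ≠ v := by
        rintro rfl
        exact hne (by rw [ha, (hboth u hu).1])
      grind
  have hBA : ‖coCutPoly a (a v) U z‖ ≤ ‖cutPoly a U (fun u => (a v u : ℂ) * z u)‖ := by
    have hr : ∀ r ∈ Set.Ioo (0 : ℝ) 1, ‖coCutPoly a (fun u => r * a v u) U z‖
        ≤ ‖cutPoly a U (fun u => ((r * a v u : ℝ) : ℂ) * z u)‖ := by
      intro r hr
      refine norm_coCutPoly_le_of_ne_zero a ha _ U (fun y hy => ?_) z hzU
      have hlt1 : ∀ u ∈ U, ‖((r * a v u : ℝ) : ℂ) * y u‖ < 1 := by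
        intro u hu
        rw [norm_mul, hnorm r u hr.1.le]
        have h1 : r * a v u ≤ r := mul_le_of_le_one_right hr.1.le (ha1 v u)
        have h2 := mul_le_of_le_one_right (mul_nonneg hr.1.le (ha0 v u)) (hy u hu)
        linarith [hr.2]
      refine ih U hlt _ (fun u hu => (hlt1 u hu).le) fun S hS ⟨u, hu⟩ hS1 => ?_
      exact absurd (hS1 u hu) (hlt1 u (hS hu)).ne
    have hcl : (1 : ℝ) ∈ closure (Set.Ioo (0 : ℝ) 1) := by
      rw [closure_Ioo zero_ne_one]; simp
    have := le_on_closure (f := fun r : ℝ => ‖coCutPoly a (fun u => r * a v u) U z‖)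
      (g := fun r : ℝ => ‖cutPoly a U (fun u => ((r * a v u : ℝ) : ℂ) * z u)‖) hr
      (by unfold coCutPoly; fun_prop) (by unfold cutPoly; fun_prop) hcl
    simpa using this
  rw [cutPoly_insert a ha hvU']
  intro h0
  have h1 : ‖cutPoly a U (fun u => (a v u : ℂ) * z u)‖ = ‖z v‖ * ‖coCutPoly a (a v) U z‖ := by
    rw [eq_neg_of_add_eq_zero_left h0, norm_neg, norm_mul]
  have h2 := norm_pos_iff.2 hA
  nlinarith [norm_nonneg (z v)]

end LeeYang

section Phase

open Polynomial

lemma one_sub_re_pos {w : ℂ} (hw : ‖w‖ < 1) : 0 < (1 - w).re := by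
  have := Complex.re_le_norm w
  simp; linarith

lemma monotone_add_log_one_sub_im {q : ℂ} (hq : ‖q‖ < 1) :
    Monotone fun x : ℝ => x + (Complex.log (1 - Complex.exp (-2 * Complex.I * x) * q)).im := by
  have hw : ∀ x : ℝ, ‖Complex.exp (-2 * Complex.I * x) * q‖ < 1 := fun x => by
    rw [norm_mul, Complex.norm_exp]; simpa
  have hd : ∀ x : ℝ, HasDerivAt
      (fun x : ℝ => x + (Complex.log (1 - Complex.exp (-2 * Complex.I * x) * q)).im)
      (1 + ((-(Complex.exp (-2 * Complex.I * x) * (-2 * Complex.I) * q)) /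
        (1 - Complex.exp (-2 * Complex.I * x) * q)).im) x := by
    intro x
    have h1 : HasDerivAt (fun x : ℝ => -2 * Complex.I * (x : ℂ)) (-2 * Complex.I) x := by
      simpa using (Complex.ofRealCLM.hasDerivAt (x := x)).const_mul (-2 * Complex.I)
    have h2 := ((h1.cexp.mul_const q).const_sub 1).clog_real
      (Complex.mem_slitPlane_iff.2 (Or.inl (one_sub_re_pos (hw x))))
    exact (hasDerivAt_id x).add (Complex.imCLM.hasFDerivAt.comp_hasDerivAt x h2)
  refine monotone_of_deriv_nonneg (fun x => (hd x).differentiableAt) fun x => ?_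
  rw [(hd x).deriv]
  have hwx := hw x
  have hpos := one_sub_re_pos hwx
  set w := Complex.exp (-2 * Complex.I * x) * q
  have hne : 0 < Complex.normSq (1 - w) := by
    rw [Complex.normSq_pos]
    intro h
    simp [h] at hpos
  have heq : -(Complex.exp (-2 * Complex.I * x) * (-2 * Complex.I) * q) = 2 * Complex.I * w := by
    simp only [w]; ring
  have hsq : w.re ^ 2 + w.im ^ 2 ≤ 1 := by
    have h1 : Complex.normSq w ≤ 1 := by
      rw [Complex.normSq_eq_norm_sq]; nlinarith [norm_nonneg w]
    rw [Complex.normSq_apply] at h1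
    linarith
  have hnum : 0 ≤ Complex.normSq (1 - w) + 2 * (w.re * (1 - w.re) - w.im * w.im) := by
    rw [Complex.normSq_apply]
    simp
    nlinarith
  rw [heq, Complex.div_im]
  have e : 1 + ((2 * Complex.I * w).im * (1 - w).re / Complex.normSq (1 - w)
      - (2 * Complex.I * w).re * (1 - w).im / Complex.normSq (1 - w))
      = (Complex.normSq (1 - w) + 2 * (w.re * (1 - w.re) - w.im * w.im)) /
        Complex.normSq (1 - w) := by
    field_simp
    simp
    ring
  rw [e]
  positivity

lemma multiset_prod_eq_norm_mul_exp (s : Multiset ℂ) (hs : (0 : ℂ) ∉ s) :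
    s.prod = ‖s.prod‖ * Complex.exp (((s.map fun w => (Complex.log w).im).sum : ℝ) * Complex.I) := by
  induction s using Multiset.induction_on with
  | empty => simp
  | cons w s ih =>
    have hw : w ≠ 0 := fun h => hs (by simp [h])
    have h := ih fun h => hs (by simp [h])
    rw [Multiset.prod_cons, Multiset.map_cons, Multiset.sum_cons, norm_mul, Complex.ofReal_add,
      add_mul, Complex.exp_add]
    conv_lhs => rw [h, ← Complex.norm_mul_exp_arg_mul_I w]
    rw [Complex.log_im]
    push_cast
    ring

/-- A real polynomial without zeros in the closed unit disc has a phase on the unit circle which,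
after multiplication by a large enough power, is strictly increasing. -/
lemma exists_phase (Q : ℝ[X]) (n : ℕ) (hdeg : Q.natDegree < n)
    (hQ : ∀ z : ℂ, ‖z‖ ≤ 1 → aeval z Q ≠ 0) (h0 : 0 < Q.eval 0) :
    ∃ θ : ℝ → ℝ, Continuous θ ∧ StrictMono θ ∧ θ 0 = 0 ∧ θ (π / 2) = n * (π / 2) ∧
      ∀ x : ℝ, Complex.exp (Complex.I * x * n) * aeval (Complex.exp (-2 * Complex.I * x)) Q =
        ‖aeval (Complex.exp (-2 * Complex.I * x)) Q‖ * Complex.exp (θ x * Complex.I) := by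
  set p : ℂ[X] := Q.map (algebraMap ℝ ℂ) with hp
  have hev : ∀ z, aeval z Q = p.eval z := fun z => by rw [hp, eval_map_algebraMap]
  have hp0 : p ≠ 0 := by
    intro h
    exact hQ 0 (by simp) (by rw [hev, h]; simp)
  have hroot : ∀ ρ ∈ p.roots, 1 < ‖ρ‖ := by
    intro ρ hρ
    by_contra! h
    exact hQ ρ h (by rw [hev]; exact (mem_roots hp0).1 hρ)
  set s : Multiset ℂ := p.roots.map (·⁻¹) with hs
  have hs1 : ∀ q ∈ s, ‖q‖ < 1 := by
    intro q hq
    obtain ⟨ρ, hρ, rfl⟩ := Multiset.mem_map.1 hq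
    rw [norm_inv]
    exact inv_lt_one_of_one_lt₀ (hroot ρ hρ)
  have hcard : Multiset.card s < n := by
    rw [hs, Multiset.card_map]
    exact (p.card_roots'.trans natDegree_map_le).trans_lt hdeg
  have hsplit : p.Splits := IsAlgClosed.splits p
  have hfac : ∀ z, p.eval z = (Q.eval 0 : ℝ) * (s.map fun q => 1 - z * q).prod := by
    intro z
    have e0 : ((Q.eval 0 : ℝ) : ℂ) = p.eval 0 := by
      rw [← hev]; simp [aeval_def, eval₂_at_zero, coeff_zero_eq_eval_zero]
    rw [e0, hsplit.eval_eq_prod_roots, hsplit.eval_eq_prod_roots, mul_assoc, hs, Multiset.map_map,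
      ← Multiset.prod_map_mul]
    congr 2
    refine Multiset.map_congr rfl fun ρ hρ => ?_
    have : ρ ≠ 0 := by
      rintro rfl
      simpa using (hroot 0 hρ).trans (by simp : ‖(0:ℂ)‖ < 1)
    simp
    field_simp
    ring
  have hconj : s.map (starRingEnd ℂ) = s := by
    have h1 : p.map (starRingEnd ℂ) = p := by
      rw [hp, Polynomial.map_map]
      congr 1
      ext; simp
    have h2 : p.roots.map (starRingEnd ℂ) = p.roots := by
      conv_rhs => rw [← h1]
      exact roots_map_of_injective_of_card_eq_natDegree (starRingEnd ℂ).injective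
        (splits_iff_card_roots.1 hsplit)
    rw [hs, Multiset.map_map]
    conv_rhs => rw [← h2, Multiset.map_map]
    exact Multiset.map_congr rfl fun ρ _ => by simp
  have hreal : ∀ r : ℝ, |r| ≤ 1 →
      (s.map fun q => (Complex.log (1 - (r : ℂ) * q)).im).sum = 0 := by
    intro r hr
    have h1 : (s.map fun q => (Complex.log (1 - (r : ℂ) * q)).im).sum
        = (s.map fun q => -(Complex.log (1 - (r : ℂ) * q)).im).sum := by
      conv_lhs => rw [← hconj, Multiset.map_map]
      refine congrArg _ (Multiset.map_congr rfl fun q hq => ?_)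
      have hrq : ‖(r : ℂ) * q‖ < 1 := by
        rw [norm_mul, Complex.norm_real, Real.norm_eq_abs]
        nlinarith [hs1 q hq, norm_nonneg q]
      have harg : (1 - (r : ℂ) * q).arg ≠ π := by
        intro h
        have := (Complex.arg_eq_pi_iff.1 h).1
        linarith [one_sub_re_pos hrq]
      have : 1 - (r : ℂ) * (starRingEnd ℂ) q = (starRingEnd ℂ) (1 - (r : ℂ) * q) := by simp
      simp only [Function.comp]
      rw [this, Complex.log_conj _ harg, Complex.conj_im]
    rw [Multiset.sum_map_neg] at h1
    linarith
  clear_value s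
  have hE : ∀ x : ℝ, ‖Complex.exp (-2 * Complex.I * x)‖ = 1 := fun x => by
    rw [Complex.norm_exp]; simp
  have hlt : ∀ x : ℝ, ∀ q ∈ s, ‖Complex.exp (-2 * Complex.I * x) * q‖ < 1 := fun x q hq => by
    rw [norm_mul, hE, one_mul]; exact hs1 q hq
  refine ⟨fun x => n * x +
    (s.map fun q => (Complex.log (1 - Complex.exp (-2 * Complex.I * x) * q)).im).sum,
    ?_, ?_, ?_, ?_, ?_⟩
  · refine (continuous_const.mul continuous_id).add ?_
    refine continuous_multiset_sum s fun q hq => ?_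
    refine Complex.continuous_im.comp (Continuous.clog (by fun_prop) fun x => ?_)
    exact Complex.mem_slitPlane_iff.2 (Or.inl (one_sub_re_pos (hlt x q hq)))
  · have hsum : ∀ x : ℝ, n * x +
        (s.map fun q => (Complex.log (1 - Complex.exp (-2 * Complex.I * x) * q)).im).sum
        = (n - Multiset.card s) * x +
        (s.map fun q => x + (Complex.log (1 - Complex.exp (-2 * Complex.I * x) * q)).im).sum := by
      intro x
      rw [Multiset.sum_map_add, Multiset.map_const', Multiset.sum_replicate, nsmul_eq_mul]
      ring
    intro x y hxy
    simp only [hsum]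
    refine add_lt_add_of_lt_of_le ?_ (Multiset.sum_map_le_sum_map _ _ fun q hq =>
      monotone_add_log_one_sub_im (hs1 q hq) hxy.le)
    exact mul_lt_mul_of_pos_left hxy (sub_pos.2 (by exact_mod_cast hcard))
  · have := hreal 1 (by simp)
    simpa using this
  · have h := hreal (-1) (by simp)
    have e : Complex.exp (-2 * Complex.I * ((π / 2 : ℝ) : ℂ)) = ((-1 : ℝ) : ℂ) := by
      rw [show -2 * Complex.I * ((π / 2 : ℝ) : ℂ) = -(π * Complex.I) by push_cast; ring,
        Complex.exp_neg, Complex.exp_pi_mul_I]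
      norm_num
    simp only [e, h, add_zero]
  · intro x
    have h := multiset_prod_eq_norm_mul_exp
      (s.map fun q => 1 - Complex.exp (-2 * Complex.I * x) * q) (by
        intro hmem
        obtain ⟨q, hq, h⟩ := Multiset.mem_map.1 hmem
        have := one_sub_re_pos (hlt x q hq)
        rw [h] at this
        simp at this)
    rw [Multiset.map_map] at h
    rw [hev, hfac, norm_mul, Complex.norm_real, Real.norm_of_nonneg h0.le, Complex.ofReal_mul]
    conv_lhs => rw [h]
    rw [Complex.ofReal_add, add_mul, Complex.exp_add]
    simp only [Function.comp_def]
    push_cast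
    rw [show Complex.I * (x : ℂ) * n = n * x * Complex.I by ring]
    ring

end Phase

section Motion

lemma eq_zero_of_exp_combination {a b : ℂ} {s t : ℝ} (hst : s ≠ t)
    (hs : Complex.exp s * a + Complex.exp (-s) * b = 0)
    (ht : Complex.exp t * a + Complex.exp (-t) * b = 0) : a = 0 ∧ b = 0 := by
  have key : ∀ r : ℝ, Complex.exp r * a + Complex.exp (-r) * b = 0 →
      Complex.exp ((2 * r : ℝ) : ℂ) * a + b = 0 := by
    intro r hr
    have h1 : Complex.exp ((2 * r : ℝ) : ℂ) = Complex.exp r * Complex.exp r := by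
      rw [← Complex.exp_add]; push_cast; ring_nf
    have h2 : Complex.exp (r : ℂ) * Complex.exp (-r) = 1 := by
      rw [← Complex.exp_add]; simp
    rw [h1]
    linear_combination Complex.exp (r : ℂ) * hr - b * h2
  have h1 := key s hs
  have h2 := key t ht
  have h3 : (Complex.exp ((2 * s : ℝ) : ℂ) - Complex.exp ((2 * t : ℝ) : ℂ)) * a = 0 := by
    linear_combination h1 - h2
  have h4 : Complex.exp ((2 * s : ℝ) : ℂ) - Complex.exp ((2 * t : ℝ) : ℂ) ≠ 0 := by
    rw [sub_ne_zero, ← Complex.ofReal_exp, ← Complex.ofReal_exp]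
    intro h
    have := Real.exp_injective (Complex.ofReal_injective h)
    exact hst (by linarith)
  have ha : a = 0 := (mul_eq_zero.1 h3).resolve_left h4
  exact ⟨ha, by simpa [ha] using h1⟩

lemma eq_of_continuousOn_of_cos_eq_zero {g : ℝ → ℝ} {S : Set ℝ} (hS : IsPreconnected S)
    (hg : ContinuousOn g S) (h : ∀ t ∈ S, Real.cos (g t) = 0) {s t : ℝ} (hs : s ∈ S)
    (ht : t ∈ S) : g s = g t := by
  have key : ∀ s ∈ S, ∀ t ∈ S, ¬ g s < g t := by
    intro s hs t ht hlt
    set δ := min (g t - g s) (π / 2)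
    have hδ0 : 0 < δ := lt_min (by linarith) (by positivity)
    have hδ1 : δ ≤ g t - g s := min_le_left _ _
    have hδ2 : δ ≤ π / 2 := min_le_right _ _
    obtain ⟨r, hr, hgr⟩ := hS.intermediate_value hs ht hg
      (show g s + δ ∈ Set.Icc (g s) (g t) from ⟨by linarith, by linarith⟩)
    have h1 := h r hr
    have h2 := h s hs
    rw [hgr, Real.cos_add, h2] at h1
    have h3 : 0 < Real.sin δ := Real.sin_pos_of_pos_of_lt_pi hδ0 (by linarith [Real.pi_pos])
    have h4 := Real.sin_sq_add_cos_sq (g s)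
    rw [h2] at h4
    have h5 : Real.sin (g s) = 0 := by
      rcases mul_eq_zero.1 (show Real.sin (g s) * Real.sin δ = 0 by linarith) with h | h
      · exact h
      · exact absurd h h3.ne'
    rw [h5] at h4
    norm_num at h4
  exact le_antisymm (not_lt.1 (key t ht s hs)) (not_lt.1 (key s hs t ht))

lemma strictMonoOn_or_strictAntiOn_Ici {f : ℝ → ℝ} (hf : ContinuousOn f (Set.Ici 0))
    (hinj : Set.InjOn f (Set.Ici 0)) :
    StrictMonoOn f (Set.Ici 0) ∨ StrictAntiOn f (Set.Ici 0) := by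
  have : Inhabited (Set.Ici (0 : ℝ)) := ⟨⟨0, by simp⟩⟩
  have h : StrictMono (Set.domRestrict (Set.Ici 0) f) ∨ StrictAnti (Set.domRestrict (Set.Ici 0) f) :=
    Continuous.strictMono_of_inj hf.domRestrict hinj.injective
  exact h.imp strictMono_domRestrict.mp Set.strictAntiOn_iff_strictAnti.mpr

lemma exactlyOne_motion {f : ℝ → ℝ} {l r : ℝ}
    (h : (∀ t : ℝ, 0 ≤ t → f t = f 0) ∨
      (StrictAntiOn f (Set.Ici 0) ∧ ∀ t : ℝ, 0 < t → f t ∈ Set.Ioo l (f 0)) ∨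
      (StrictMonoOn f (Set.Ici 0) ∧ ∀ t : ℝ, 0 < t → f t ∈ Set.Ioo (f 0) r)) :
    ExactlyOne (∀ t : ℝ, 0 ≤ t → f t = f 0)
      (StrictAntiOn f (Set.Ici 0) ∧ ∀ t : ℝ, 0 < t → f t ∈ Set.Ioo l (f 0))
      (StrictMonoOn f (Set.Ici 0) ∧ ∀ t : ℝ, 0 < t → f t ∈ Set.Ioo (f 0) r) := by
  have hab : (∀ t : ℝ, 0 ≤ t → f t = f 0) →
      ¬ (StrictAntiOn f (Set.Ici 0) ∧ ∀ t : ℝ, 0 < t → f t ∈ Set.Ioo l (f 0)) :=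
    fun h1 h2 => (h2.2 1 one_pos).2.ne (h1 1 zero_le_one)
  have hac : (∀ t : ℝ, 0 ≤ t → f t = f 0) →
      ¬ (StrictMonoOn f (Set.Ici 0) ∧ ∀ t : ℝ, 0 < t → f t ∈ Set.Ioo (f 0) r) :=
    fun h1 h2 => (h2.2 1 one_pos).1.ne' (h1 1 zero_le_one)
  have hbc : (StrictAntiOn f (Set.Ici 0) ∧ ∀ t : ℝ, 0 < t → f t ∈ Set.Ioo l (f 0)) →
      ¬ (StrictMonoOn f (Set.Ici 0) ∧ ∀ t : ℝ, 0 < t → f t ∈ Set.Ioo (f 0) r) :=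
    fun h1 h2 => lt_asymm (h1.2 1 one_pos).2 (h2.2 1 one_pos).1
  unfold ExactlyOne
  tauto

/-- Motion of the zeros of `e ^ t * A + e ^ (-t) * B` when they are the points at which a strictly
increasing phase `θ t` with fixed end values is an odd multiple of `π / 2`. -/
lemma exists_zero_motion (m : ℕ) (F : ℝ → ℝ → ℂ) (A B : ℝ → ℂ) (θ : ℝ → ℝ → ℝ)
    (hFAB : ∀ t x, F t x = Complex.exp t * A x + Complex.exp (-t) * B x)
    (hF : ∀ t, 0 ≤ t → ∀ x ∈ Set.Icc 0 (π / 2), F t x = 0 ↔ Real.cos (θ t x) = 0)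
    (hθc : ∀ t, 0 ≤ t → Continuous (θ t)) (hθm : ∀ t, 0 ≤ t → StrictMono (θ t))
    (hθ0 : ∀ t, 0 ≤ t → θ t 0 = 0)
    (hθ1 : ∀ t, 0 ≤ t → θ t (π / 2) = (2 * m + 1 : ℕ) * (π / 2))
    (hθt : ∀ x ∈ Set.Icc 0 (π / 2), ContinuousOn (fun t => θ t x) (Set.Ici 0)) :
    ∃ x : ℕ → ℝ → ℝ,
      (∀ k ∈ Finset.Icc 1 m, ContinuousOn (x k) (Set.Ici 0)) ∧
      (∀ t : ℝ, 0 ≤ t →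
        (∀ k ∈ Finset.Icc 1 m, 0 < x k t ∧ x k t < π / 2) ∧
        (∀ k, 1 ≤ k → k < m → x k t < x (k + 1) t) ∧
        {z : ℝ | z ∈ Set.Ioo 0 (π / 2) ∧ F t z = 0} = (fun k => x k t) '' Set.Icc 1 m) ∧
      (∀ k ∈ Finset.Icc 1 m,
        ExactlyOne
          (∀ t : ℝ, 0 ≤ t → x k t = x k 0)
          (StrictAntiOn (x k) (Set.Ici 0) ∧
            ∀ t : ℝ, 0 < t →
              x k t ∈ Set.Ioo (if k = 1 then 0 else x (k - 1) 0) (x k 0))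
          (StrictMonoOn (x k) (Set.Ici 0) ∧
            ∀ t : ℝ, 0 < t →
              x k t ∈ Set.Ioo (x k 0) (if k = m then π / 2 else x (k + 1) 0))) := by
  have hpi := Real.pi_pos
  have hex : ∀ (k : ℕ) (t : ℝ), ∃ y : ℝ, 1 ≤ k ∧ k ≤ m → 0 ≤ t →
      (0 < y ∧ y < π / 2) ∧ θ t y = (2 * k - 1) * (π / 2) := by
    intro k t
    by_cases h : (1 ≤ k ∧ k ≤ m) ∧ 0 ≤ t
    swap
    · exact ⟨0, fun h1 h2 => absurd ⟨h1, h2⟩ h⟩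
    obtain ⟨⟨hk1, hkm⟩, ht⟩ := h
    have hk1' : (1 : ℝ) ≤ k := by exact_mod_cast hk1
    have hkm' : (k : ℝ) ≤ m := by exact_mod_cast hkm
    have hmem : (2 * k - 1) * (π / 2) ∈ Set.Ioo (θ t 0) (θ t (π / 2)) := by
      rw [hθ0 t ht, hθ1 t ht]
      push_cast
      constructor <;> nlinarith
    obtain ⟨y, hy, hy'⟩ := intermediate_value_Ioo (by positivity) (hθc t ht).continuousOn hmem
    exact ⟨y, fun _ _ => ⟨hy, hy'⟩⟩
  choose x hx using hex
  have hpos : ∀ k t, 1 ≤ k ∧ k ≤ m → 0 ≤ t → 0 < x k t := fun k t hk ht => (hx k t hk ht).1.1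
  have hltp : ∀ k t, 1 ≤ k ∧ k ≤ m → 0 ≤ t → x k t < π / 2 := fun k t hk ht => (hx k t hk ht).1.2
  have hθx : ∀ k t, 1 ≤ k ∧ k ≤ m → 0 ≤ t → θ t (x k t) = (2 * k - 1) * (π / 2) :=
    fun k t hk ht => (hx k t hk ht).2
  have hIcc : ∀ k t, 1 ≤ k ∧ k ≤ m → 0 ≤ t → x k t ∈ Set.Icc 0 (π / 2) :=
    fun k t hk ht => ⟨(hpos k t hk ht).le, (hltp k t hk ht).le⟩
  have hcos : ∀ k : ℕ, Real.cos ((2 * k - 1) * (π / 2)) = 0 := by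
    intro k
    rw [Real.cos_eq_zero_iff]
    exact ⟨(k : ℤ) - 1, by push_cast; ring⟩
  have hzero : ∀ k t, 1 ≤ k ∧ k ≤ m → 0 ≤ t → F t (x k t) = 0 := by
    intro k t hk ht
    rw [hF t ht _ (hIcc k t hk ht), hθx k t hk ht, hcos]
  have hcont : ∀ k, 1 ≤ k ∧ k ≤ m → ContinuousOn (x k) (Set.Ici 0) := by
    intro k hk t ht
    have ht' : 0 ≤ t := ht
    refine tendsto_order.2 ⟨fun a ha => ?_, fun b hb => ?_⟩
    · have hmax : max a 0 < x k t := max_lt ha (hpos k t hk ht')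
      have h1 : θ t (max a 0) < (2 * k - 1) * (π / 2) := by
        rw [← hθx k t hk ht']; exact hθm t ht' hmax
      filter_upwards [(hθt (max a 0) ⟨le_max_right _ _, hmax.le.trans (hltp k t hk ht').le⟩ t
        ht).eventually_lt_const h1, self_mem_nhdsWithin] with s hs hs0
      rw [← hθx k s hk hs0] at hs
      exact (le_max_left _ _).trans_lt ((hθm s hs0).lt_iff_lt.1 hs)
    · have hmin : x k t < min b (π / 2) := lt_min hb (hltp k t hk ht')
      have h1 : (2 * k - 1) * (π / 2) < θ t (min b (π / 2)) := by
        rw [← hθx k t hk ht']; exact hθm t ht' hmin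
      filter_upwards [(hθt (min b (π / 2)) ⟨(hpos k t hk ht').le.trans hmin.le, min_le_right _ _⟩ t
        ht).eventually_const_lt h1, self_mem_nhdsWithin] with s hs hs0
      rw [← hθx k s hk hs0] at hs
      exact ((hθm s hs0).lt_iff_lt.1 hs).trans_le (min_le_left _ _)
  have hstep : ∀ k t, 1 ≤ k → k < m → 0 ≤ t → x k t < x (k + 1) t := by
    intro k t hk1 hkm ht
    rw [← (hθm t ht).lt_iff_lt, hθx k t ⟨hk1, hkm.le⟩ ht, hθx (k + 1) t ⟨by omega, hkm⟩ ht]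
    push_cast
    nlinarith
  have hfix : ∀ k, 1 ≤ k ∧ k ≤ m → ∀ s t, 0 ≤ s → 0 ≤ t → s ≠ t → F t (x k s) = 0 →
      ∀ r, 0 ≤ r → x k r = x k s := by
    intro k hk s t hs ht hst h0 r hr
    have h1 := hzero k s hk hs
    rw [hFAB] at h0 h1
    obtain ⟨hA, hB⟩ := eq_zero_of_exp_combination hst h1 h0
    have h2 := eq_of_continuousOn_of_cos_eq_zero isPreconnected_Ici (hθt _ (hIcc k s hk hs))
      (fun q hq => by rw [← hF q hq _ (hIcc k s hk hs), hFAB, hA, hB]; simp)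
      (show r ∈ Set.Ici 0 from hr) (show s ∈ Set.Ici 0 from hs)
    apply (hθm r hr).injective
    rw [hθx k r hk hr, h2, hθx k s hk hs]
  have havoid : ∀ j k, (1 ≤ j ∧ j ≤ m) → (1 ≤ k ∧ k ≤ m) → (∀ t, 0 ≤ t → x j t ≠ x k t) →
      ∀ t, 0 ≤ t → x k t ≠ x j 0 := by
    intro j k hj hk hjk t ht h
    rcases ht.eq_or_lt with rfl | ht'
    · exact hjk 0 le_rfl h.symm
    · refine hjk t ht ?_
      rw [h]
      exact hfix j hj 0 t le_rfl ht ht'.ne (by rw [← h]; exact hzero k t hk ht) t ht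
  refine ⟨x, fun k hk => hcont k (Finset.mem_Icc.1 hk), fun t ht => ⟨fun k hk =>
    (hx k t (Finset.mem_Icc.1 hk) ht).1, fun k h1 h2 => hstep k t h1 h2 ht, ?_⟩, fun k hk => ?_⟩
  · ext z
    simp only [Set.mem_ofPred_eq, Set.mem_image, Set.mem_Icc]
    constructor
    · rintro ⟨hz, hz0⟩
      rw [hF t ht z (Set.Ioo_subset_Icc_self hz), Real.cos_eq_zero_iff] at hz0
      obtain ⟨j, hj⟩ := hz0
      have h1 := hθm t ht hz.1
      have h2 := hθm t ht hz.2
      rw [hθ0 t ht, hj] at h1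
      rw [hθ1 t ht, hj] at h2
      have h3 : (-1 : ℝ) < 2 * j := by
        by_contra! h
        nlinarith
      have h4 : (2 * j : ℝ) < 2 * m := by
        by_contra! h
        push_cast at h2
        nlinarith
      have h3' : (-1 : ℤ) < 2 * j := by exact_mod_cast h3
      have h4' : 2 * j < 2 * (m : ℤ) := by exact_mod_cast h4
      obtain ⟨i, rfl⟩ := Int.eq_ofNat_of_zero_le (show 0 ≤ j by omega)
      have hi : 1 ≤ i + 1 ∧ i + 1 ≤ m := by omega
      refine ⟨i + 1, hi, (hθm t ht).injective ?_⟩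
      rw [hθx _ t hi ht, hj]
      push_cast
      ring
    · rintro ⟨k, hk, rfl⟩
      exact ⟨(hx k t hk ht).1, hzero k t hk ht⟩
  · have hk := Finset.mem_Icc.1 hk
    apply exactlyOne_motion
    by_cases hconst : ∀ t : ℝ, 0 ≤ t → x k t = x k 0
    · exact Or.inl hconst
    right
    have hinj : Set.InjOn (x k) (Set.Ici 0) := by
      intro s hs t ht hst
      by_contra hne
      have h1 := hfix k hk s t hs ht hne (by rw [hst]; exact hzero k t hk ht)
      exact hconst fun r hr => by rw [h1 r hr, h1 0 le_rfl]
    have hcont' : ∀ t, 0 ≤ t → ContinuousOn (x k) (Set.Icc 0 t) := fun t _ =>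
      (hcont k hk).mono fun s hs => hs.1
    rcases strictMonoOn_or_strictAntiOn_Ici (hcont k hk) hinj with hmono | hanti
    · refine Or.inr ⟨hmono, fun t ht => ⟨hmono Set.self_mem_Ici ht.le ht, ?_⟩⟩
      split_ifs with hkm
      · exact hltp k t hk ht.le
      · by_contra! hle
        have hk' : 1 ≤ k + 1 ∧ k + 1 ≤ m := by omega
        obtain ⟨s, hs, hxs⟩ := intermediate_value_Icc ht.le (hcont' t ht.le)
          ⟨(hstep k 0 hk.1 (by omega) le_rfl).le, hle⟩
        exact havoid (k + 1) k hk' hk (fun r hr => (hstep k r hk.1 (by omega) hr).ne') s hs.1 hxs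
    · refine Or.inl ⟨hanti, fun t ht => ⟨?_, hanti Set.self_mem_Ici ht.le ht⟩⟩
      split_ifs with hk1
      · exact hpos k t hk ht.le
      · by_contra! hle
        obtain ⟨j, rfl⟩ : ∃ j, k = j + 1 := ⟨k - 1, by omega⟩
        have hj : 1 ≤ j ∧ j ≤ m := by omega
        rw [Nat.add_sub_cancel] at hle
        obtain ⟨s, hs, hxs⟩ := intermediate_value_Icc' ht.le (hcont' t ht.le)
          ⟨hle, (hstep j 0 hj.1 (by omega) le_rfl).le⟩
        exact havoid j (j + 1) hj hk (fun r hr => (hstep j r hj.1 (by omega) hr).ne) s hs.1 hxs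

end Motion

section Ising

variable {V : Type}

lemma spin_not (b : Bool) : spin (!b) = -spin b := by
  cases b <;> simp [spin]

lemma pairProd_not (σ : V → Bool) (e : Sym2 V) : pairProd (fun u => !σ u) e = pairProd σ e := by
  induction e using Sym2.ind with
  | _ p q => simp [pairProd, spin_not]

variable [DecidableEq V]

/-- The coupling between two vertices, including the varying coupling `t` at `u₀v₀`. -/
noncomputable def pairCoupling (E : Finset (Sym2 V)) (J : Sym2 V → ℝ) (u₀ v₀ : V) (t : ℝ)
    (u w : V) : ℝ :=
  (if s(u, w) ∈ E then J s(u, w) else 0) + if s(u, w) ∈ ({s(u₀, v₀)} : Finset (Sym2 V)) then t else 0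

/-- The weight of the disagreement of two neighbouring spins. -/
noncomputable def edgeActivity (E : Finset (Sym2 V)) (J : Sym2 V → ℝ) (u₀ v₀ : V) (t : ℝ)
    (u w : V) : ℝ :=
  Real.exp (-2 * pairCoupling E J u₀ v₀ t u w)

lemma edgeActivity_comm (E : Finset (Sym2 V)) (J : Sym2 V → ℝ) (u₀ v₀ : V) (t : ℝ) (u w : V) :
    edgeActivity E J u₀ v₀ t u w = edgeActivity E J u₀ v₀ t w u := by
  simp only [edgeActivity, pairCoupling, Sym2.eq_swap (a := u) (b := w)]

/-- The configuration with minus spins exactly on `S`. -/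
def minusOn (S : Finset V) : V → Bool := fun u => decide (u ∉ S)

variable [Fintype V]

/-- The part of the Ising partition function in which the spin at `v` is `+1`. -/
noncomputable def isingHalf (E : Finset (Sym2 V)) (J : Sym2 V → ℝ) (u₀ v₀ v : V) (t x : ℝ) : ℂ :=
  ∑ σ : V → Bool with σ v = true, Complex.exp
    ((t : ℂ) * ((spin (σ u₀) * spin (σ v₀) : ℝ) : ℂ)
      + ((∑ e ∈ E, J e * pairProd σ e : ℝ) : ℂ)
      + Complex.I * x * ((∑ u, spin (σ u) : ℝ) : ℂ))

lemma isingZ_eq_isingHalf_add_conj (E : Finset (Sym2 V)) (J : Sym2 V → ℝ) (u₀ v₀ v : V)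
    (t x : ℝ) :
    IsingZ E J u₀ v₀ t x = isingHalf E J u₀ v₀ v t x +
      (starRingEnd ℂ) (isingHalf E J u₀ v₀ v t x) := by
  unfold IsingZ isingHalf
  rw [← Finset.sum_filter_add_sum_filter_not Finset.univ (fun σ : V → Bool => σ v = true), map_sum]
  congr 1
  refine Finset.sum_nbij' (fun σ u => !σ u) (fun σ u => !σ u) (by simp) (by simp)
    (by simp) (by simp) fun σ _ => ?_
  rw [← Complex.exp_conj]
  congr 1
  simp only [map_add, map_mul, Complex.conj_ofReal, Complex.conj_I, spin_not, pairProd_not,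
    Finset.sum_neg_distrib]
  push_cast
  ring

lemma sum_pairProd_minusOn (E : Finset (Sym2 V)) (J : Sym2 V → ℝ) (S : Finset V) :
    ∑ e ∈ E, J e * pairProd (minusOn S) e =
      ∑ e ∈ E, J e - 2 * ∑ u ∈ S, ∑ w ∈ Finset.univ \ S, if s(u, w) ∈ E then J s(u, w) else 0 := by
  have hpair : ∀ e : Sym2 V, pairProd (minusOn S) e =
      1 - 2 * ∑ u ∈ S, ∑ w ∈ Finset.univ \ S, if e = s(u, w) then (1 : ℝ) else 0 := by
    have hcut : ∀ p ∈ S, ∀ q ∉ S,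
        ∑ u ∈ S, ∑ w ∈ Finset.univ \ S, (if s(p, q) = s(u, w) then (1 : ℝ) else 0) = 1 := by
      intro p hp q hq
      rw [Finset.sum_eq_single_of_mem p hp, Finset.sum_eq_single_of_mem q (by simpa using hq)]
      · simp
      · intro w _ hw
        rw [if_neg]
        grind [Sym2.eq_iff]
      · intro u hu hup
        refine Finset.sum_eq_zero fun w hw => ?_
        rw [if_neg]
        grind [Sym2.eq_iff]
    have hnone : ∀ p q, (p ∈ S ↔ q ∈ S) →
        ∑ u ∈ S, ∑ w ∈ Finset.univ \ S, (if s(p, q) = s(u, w) then (1 : ℝ) else 0) = 0 := by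
      intro p q hpq
      refine Finset.sum_eq_zero fun u hu => Finset.sum_eq_zero fun w hw => ?_
      rw [if_neg]
      grind [Sym2.eq_iff]
    intro e
    induction e using Sym2.ind with
    | _ p q =>
    by_cases hp : p ∈ S <;> by_cases hq : q ∈ S
    · rw [hnone p q (by tauto)]
      simp [pairProd, minusOn, spin, hp, hq]
    · rw [hcut p hp q hq]
      simp [pairProd, minusOn, spin, hp, hq]
      norm_num
    · rw [Sym2.eq_swap, hcut q hq p hp]
      simp [pairProd, minusOn, spin, hp, hq]
      norm_num
    · rw [hnone p q (by tauto)]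
      simp [pairProd, minusOn, spin, hp, hq]
  have hswap : ∑ u ∈ S, ∑ w ∈ Finset.univ \ S, (if s(u, w) ∈ E then J s(u, w) else 0) =
      ∑ e ∈ E, J e * ∑ u ∈ S, ∑ w ∈ Finset.univ \ S, if e = s(u, w) then (1 : ℝ) else 0 := by
    simp_rw [Finset.mul_sum]
    rw [Finset.sum_comm (s := E)]
    refine Finset.sum_congr rfl fun u _ => ?_
    rw [Finset.sum_comm (s := E)]
    refine Finset.sum_congr rfl fun w _ => ?_
    simp
  rw [hswap, Finset.mul_sum, ← Finset.sum_sub_distrib]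
  refine Finset.sum_congr rfl fun e _ => ?_
  rw [hpair]
  ring

lemma sum_spin_minusOn (S : Finset V) :
    ∑ u, spin (minusOn S u) = Fintype.card V - 2 * S.card := by
  have h : ∀ u, spin (minusOn S u) = 1 - 2 * if u ∈ S then (1 : ℝ) else 0 := by
    intro u
    by_cases hu : u ∈ S
    · simp [spin, minusOn, hu]; norm_num
    · simp [spin, minusOn, hu]
  simp [h, Finset.sum_sub_distrib, mul_comm]

/-- The generating polynomial of the minus spins of the configurations with a plus spin at `v`. -/
noncomputable def halfPoly (a : V → V → ℝ) (v : V) : Polynomial ℝ :=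
  ∑ S ∈ (Finset.univ.erase v).powerset,
    Polynomial.C (∏ u ∈ S, ∏ w ∈ Finset.univ \ S, a u w) * Polynomial.X ^ S.card

lemma aeval_halfPoly (a : V → V → ℝ) (v : V) (z : ℂ) :
    Polynomial.aeval z (halfPoly a v) = ∑ S ∈ (Finset.univ.erase v).powerset,
      (∏ u ∈ S, ∏ w ∈ Finset.univ \ S, (a u w : ℂ)) * z ^ S.card := by
  simp [halfPoly]

lemma natDegree_halfPoly_lt (a : V → V → ℝ) (v : V) :
    (halfPoly a v).natDegree < Fintype.card V := by
  have hpos : 0 < Fintype.card V := Fintype.card_pos_iff.2 ⟨v⟩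
  refine lt_of_le_of_lt (Polynomial.natDegree_sum_le_of_forall_le (n := Fintype.card V - 1) _ _
    fun S hS => ?_) (by omega)
  refine (Polynomial.natDegree_C_mul_X_pow_le _ _).trans ?_
  have := Finset.card_le_card (Finset.mem_powerset.1 hS)
  rwa [Finset.card_erase_of_mem (Finset.mem_univ v), Finset.card_univ] at this

lemma eval_zero_halfPoly (a : V → V → ℝ) (v : V) : (halfPoly a v).eval 0 = 1 := by
  rw [halfPoly, Polynomial.eval_finsetSum, Finset.sum_eq_single_of_mem ∅ (by simp)]
  · simp
  · intro S _ hS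
    simp [hS]

lemma isingHalf_eq (E : Finset (Sym2 V)) (J : Sym2 V → ℝ) (u₀ v₀ v : V) (t x : ℝ) :
    isingHalf E J u₀ v₀ v t x = (Real.exp (t + ∑ e ∈ E, J e) : ℝ) *
      (Complex.exp (Complex.I * x * (Fintype.card V : ℕ)) *
        Polynomial.aeval (Complex.exp (-2 * Complex.I * x))
          (halfPoly (edgeActivity E J u₀ v₀ t) v)) := by
  rw [aeval_halfPoly, isingHalf, Finset.mul_sum, Finset.mul_sum]
  refine Finset.sum_nbij' (fun σ => Finset.univ.filter fun u => σ u = false) minusOn ?_ ?_ ?_ ?_ ?_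
  · intro σ hσ
    have hσ' : σ v = true := by simpa using hσ
    simp only [Finset.mem_powerset]
    intro u hu
    have hu' : σ u = false := by simpa using hu
    simp only [Finset.mem_erase, Finset.mem_univ, and_true]
    rintro rfl
    simp [hσ'] at hu'
  · intro S hS
    have := Finset.mem_powerset.1 hS
    have hv : v ∉ S := fun h => by simpa using this h
    simp [minusOn, hv]
  · intro σ _
    funext u
    simp [minusOn]
  · intro S _
    ext u
    simp [minusOn]
  · intro σ _
    obtain ⟨S, rfl⟩ : ∃ S : Finset V, σ = minusOn S :=
      ⟨Finset.univ.filter fun u => σ u = false, by funext u; simp [minusOn]⟩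
    have hS : (Finset.univ.filter fun u => minusOn S u = false) = S := by
      ext u; simp [minusOn]
    have henergy : t * (spin (minusOn S u₀) * spin (minusOn S v₀)) +
        ∑ e ∈ E, J e * pairProd (minusOn S) e = (t + ∑ e ∈ E, J e) +
          ∑ u ∈ S, ∑ w ∈ Finset.univ \ S, (-2 * pairCoupling E J u₀ v₀ t u w) := by
      have h1 := sum_pairProd_minusOn E J S
      have h2 := sum_pairProd_minusOn {s(u₀, v₀)} (fun _ => t) S
      rw [Finset.sum_singleton, Finset.sum_singleton] at h2
      have h3 : pairProd (minusOn S) s(u₀, v₀) = spin (minusOn S u₀) * spin (minusOn S v₀) := rfl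
      rw [h3] at h2
      simp only [← Finset.mul_sum, pairCoupling, Finset.sum_add_distrib]
      linarith
    have hprod : ∏ u ∈ S, ∏ w ∈ Finset.univ \ S, (edgeActivity E J u₀ v₀ t u w : ℂ) =
        Complex.exp ((∑ u ∈ S, ∑ w ∈ Finset.univ \ S, (-2 * pairCoupling E J u₀ v₀ t u w) : ℝ)) := by
      simp only [edgeActivity, Complex.ofReal_exp, Complex.ofReal_sum, Complex.exp_sum]
    rw [hS, hprod, sum_spin_minusOn, ← Complex.ofReal_mul, ← Complex.ofReal_add, henergy,
      ← Complex.exp_nat_mul, Complex.ofReal_exp, ← Complex.exp_add, ← Complex.exp_add,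
      ← Complex.exp_add]
    congr 1
    push_cast
    ring

lemma aeval_halfPoly_ne_zero (E : Finset (Sym2 V)) (J : Sym2 V → ℝ) (u₀ v₀ v : V)
    (hferro : ∀ e ∈ E, 0 ≤ J e)
    (hconn : (SimpleGraph.fromEdgeSet {e : Sym2 V | e ∈ E ∧ 0 < J e}).Connected)
    (t : ℝ) (ht : 0 ≤ t) (z : ℂ) (hz : ‖z‖ ≤ 1) :
    Polynomial.aeval z (halfPoly (edgeActivity E J u₀ v₀ t) v) ≠ 0 := by
  set a := edgeActivity E J u₀ v₀ t with ha
  have hsymm : ∀ u w, a u w = a w u := edgeActivity_comm E J u₀ v₀ t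
  have hc : ∀ u w, (if s(u, w) ∈ E then J s(u, w) else 0) ≤ pairCoupling E J u₀ v₀ t u w := by
    intro u w
    unfold pairCoupling
    split_ifs <;> linarith
  have ha0 : ∀ u w, 0 < a u w := fun u w => Real.exp_pos _
  have ha1 : ∀ u w, a u w ≤ 1 := by
    intro u w
    have h1 := hc u w
    have h2 : 0 ≤ pairCoupling E J u₀ v₀ t u w := by
      refine le_trans ?_ h1
      split_ifs with h
      · exact hferro _ h
      · exact le_rfl
    exact Real.exp_le_one_iff.2 (by linarith)
  have hinsert : insert v (Finset.univ.erase v) = (Finset.univ : Finset V) :=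
    Finset.insert_erase (Finset.mem_univ v)
  have heq : Polynomial.aeval z (halfPoly a v) =
      cutPoly a (Finset.univ.erase v) (fun u => (a v u : ℂ) * z) := by
    rw [aeval_halfPoly, cutPoly]
    refine Finset.sum_congr rfl fun S hS => ?_
    have h := prod_cut_insert a hsymm (Finset.notMem_erase v Finset.univ)
      (Finset.mem_powerset.1 hS)
    rw [hinsert] at h
    rw [h, Finset.prod_mul_distrib, Finset.prod_const]
    ring
  rw [heq]
  have hnorm : ∀ u, ‖(a v u : ℂ) * z‖ = a v u * ‖z‖ := fun u => by
    rw [norm_mul, Complex.norm_real, Real.norm_of_nonneg (ha0 v u).le]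
  refine cutPoly_ne_zero a hsymm (fun u w => (ha0 u w).le) ha1 _ _ (fun u _ => ?_) ?_
  · rw [hnorm]
    exact mul_le_one₀ (ha1 v u) (norm_nonneg _) hz
  · intro S hS ⟨p, hp⟩ hS1
    have hone : ∀ u ∈ S, a v u = 1 := by
      intro u hu
      have h1 := hS1 u hu
      rw [hnorm] at h1
      nlinarith [ha1 v u, ha0 v u, norm_nonneg z]
    have hvS : v ∉ S := fun h => by simpa using hS h
    obtain ⟨q⟩ := hconn.preconnected p v
    obtain ⟨d, _, hd1, hd2⟩ := q.exists_boundary_dart (S : Set V) hp hvS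
    have hadj := d.adj
    rw [SimpleGraph.fromEdgeSet_adj] at hadj
    obtain ⟨⟨hE, hJ⟩, _⟩ := hadj
    have hlt : a d.fst d.snd ≠ 1 := by
      have h1 := hc d.fst d.snd
      rw [if_pos hE] at h1
      exact (Real.exp_lt_one_iff.2 (by linarith)).ne
    refine ⟨d.fst, hd1, d.snd, ?_, hlt⟩
    have hne : d.snd ≠ v := by
      intro h
      rw [h, hsymm, hone _ hd1] at hlt
      exact hlt rfl
    simp only [Finset.mem_sdiff, Finset.mem_erase, Finset.mem_univ, and_true]
    exact ⟨hne, hd2⟩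

/-- A phase of a jointly continuous family of nonvanishing functions which is normalised at `0`
depends continuously on the parameter. -/
lemma continuousOn_phase_param {G : ℝ → ℝ → ℂ} (hG : Continuous (Function.uncurry G))
    {θ : ℝ → ℝ → ℝ} (hne : ∀ t, 0 ≤ t → ∀ x, G t x ≠ 0)
    (hθ : ∀ t, 0 ≤ t → ∀ x, G t x = ‖G t x‖ * Complex.exp (θ t x * Complex.I))
    (hθc : ∀ t, 0 ≤ t → Continuous (θ t)) (hθ0 : ∀ t, 0 ≤ t → θ t 0 = 0) (x : ℝ) :
    ContinuousOn (fun t => θ t x) (Set.Ici 0) := by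
  set g : unitInterval × Set.Ici (0 : ℝ) → ℝ := fun p => θ p.2 (p.1 * x) with hg
  have hexp : ∀ p, (Circle.exp (g p) : ℂ) = G p.2 (p.1 * x) / ‖G p.2 (p.1 * x)‖ := by
    intro p
    have h0 : (‖G p.2 (p.1 * x)‖ : ℂ) ≠ 0 := by
      simpa using hne p.2 p.2.2 (p.1 * x)
    rw [Circle.coe_exp, eq_div_iff h0, mul_comm]
    exact (hθ p.2 p.2.2 (p.1 * x)).symm
  have hGc : Continuous fun p : unitInterval × Set.Ici (0 : ℝ) => G p.2 (p.1 * x) :=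
    hG.comp (f := fun p : unitInterval × Set.Ici (0 : ℝ) => ((p.2 : ℝ), (p.1 : ℝ) * x))
      (by fun_prop)
  have hcont : Continuous fun p => Circle.exp (g p) := by
    refine continuous_induced_rng.2 (Continuous.congr ?_ fun p => (hexp p).symm)
    refine hGc.div (by fun_prop) fun p => ?_
    simpa using hne p.2 p.2.2 (p.1 * x)
  have hgc : Continuous g := by
    refine isLocalHomeomorph_circleExp.continuous_lift Circle.isCoveringMap_exp.isSeparatedMap
      ⟨_, hcont⟩ rfl ?_ fun t => ?_
    · simp only [hg, Set.Icc.coe_zero, zero_mul, fun t : Set.Ici (0 : ℝ) => hθ0 t t.2]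
      exact continuous_const
    · exact (hθc t t.2).comp (by fun_prop)
  rw [continuousOn_iff_continuous_domRestrict]
  have := hgc.comp (f := fun t : Set.Ici (0 : ℝ) => ((1 : unitInterval), t)) (by fun_prop)
  simpa [hg, Function.comp_def, Set.domRestrict_def] using this

lemma exists_isingZ_eq_exp_combination (E : Finset (Sym2 V)) (J : Sym2 V → ℝ) (u₀ v₀ : V) :
    ∃ A B : ℝ → ℂ, ∀ t x : ℝ,
      IsingZ E J u₀ v₀ t x = Complex.exp t * A x + Complex.exp (-t) * B x := by
  set w : (V → Bool) → ℝ → ℂ := fun σ x => Complex.exp (((∑ e ∈ E, J e * pairProd σ e : ℝ) : ℂ)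
      + Complex.I * x * ((∑ u, spin (σ u) : ℝ) : ℂ)) with hw
  refine ⟨fun x => ∑ σ : V → Bool, if σ u₀ = σ v₀ then w σ x else 0,
    fun x => ∑ σ : V → Bool, if σ u₀ = σ v₀ then 0 else w σ x, fun t x => ?_⟩
  rw [IsingZ, Finset.mul_sum, Finset.mul_sum, ← Finset.sum_add_distrib]
  refine Finset.sum_congr rfl fun σ _ => ?_
  rw [add_assoc, Complex.exp_add]
  cases h : σ u₀ <;> cases h' : σ v₀ <;> simp [spin, hw]

end Ising

theorem stmt1 {V : Type} [Fintype V] [DecidableEq V]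
    (E : Finset (Sym2 V)) (J : Sym2 V → ℝ) (u₀ v₀ : V)
    (hE : s(u₀, v₀) ∈ E)
    (hferro : ∀ e ∈ E, 0 ≤ J e)
    (hconn : (SimpleGraph.fromEdgeSet {e : Sym2 V | e ∈ E ∧ 0 < J e}).Connected)
    (n : ℕ) (hn : n = Fintype.card V) (hodd : Odd n) :
    (∀ t : ℝ, 0 ≤ t → IsingZ E J u₀ v₀ t ((π / 2 : ℝ) : ℂ) = 0) ∧
    ∃ x : ℕ → ℝ → ℝ,
      (∀ k ∈ Finset.Icc 1 ((n - 1) / 2), ContinuousOn (x k) (Set.Ici 0)) ∧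
      (∀ t : ℝ, 0 ≤ t →
        (∀ k ∈ Finset.Icc 1 ((n - 1) / 2), 0 < x k t ∧ x k t < π / 2) ∧
        (∀ k, 1 ≤ k → k < (n - 1) / 2 → x k t < x (k + 1) t) ∧
        {z : ℝ | z ∈ Set.Ioo 0 (π / 2) ∧ IsingZ E J u₀ v₀ t z = 0}
          = (fun k => x k t) '' Set.Icc 1 ((n - 1) / 2)) ∧
      (∀ k ∈ Finset.Icc 1 ((n - 1) / 2),
        ExactlyOne
          (∀ t : ℝ, 0 ≤ t → x k t = x k 0)
          (StrictAntiOn (x k) (Set.Ici 0) ∧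
            ∀ t : ℝ, 0 < t →
              x k t ∈ Set.Ioo (if k = 1 then 0 else x (k - 1) 0) (x k 0))
          (StrictMonoOn (x k) (Set.Ici 0) ∧
            ∀ t : ℝ, 0 < t →
              x k t ∈ Set.Ioo (x k 0)
                (if k = (n - 1) / 2 then π / 2 else x (k + 1) 0))) := by
  obtain ⟨m, hm⟩ := hodd
  have hm' : (n - 1) / 2 = m := by omega
  have hex : ∀ t : ℝ, ∃ θ : ℝ → ℝ, 0 ≤ t → Continuous θ ∧ StrictMono θ ∧ θ 0 = 0 ∧
      θ (π / 2) = n * (π / 2) ∧ ∀ x : ℝ, isingHalf E J u₀ v₀ u₀ t x ≠ 0 ∧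
        isingHalf E J u₀ v₀ u₀ t x =
          ‖isingHalf E J u₀ v₀ u₀ t x‖ * Complex.exp (θ x * Complex.I) := by
    intro t
    by_cases ht : 0 ≤ t
    swap
    · exact ⟨0, fun h => absurd h ht⟩
    have hQ := aeval_halfPoly_ne_zero E J u₀ v₀ u₀ hferro hconn t ht
    obtain ⟨θ, h1, h2, h3, h4, h5⟩ := exists_phase (halfPoly (edgeActivity E J u₀ v₀ t) u₀) n
      (hn ▸ natDegree_halfPoly_lt _ _) hQ (by rw [eval_zero_halfPoly]; exact one_pos)
    refine ⟨θ, fun _ => ⟨h1, h2, h3, h4, fun x => ?_⟩⟩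
    have hE : ‖Complex.exp (-2 * Complex.I * x)‖ = 1 := by
      rw [Complex.norm_exp]; simp
    have hC : 0 < Real.exp (t + ∑ e ∈ E, J e) := Real.exp_pos _
    have hθ1 : ‖Complex.exp (θ x * Complex.I)‖ = 1 := Complex.norm_exp_ofReal_mul_I _
    have hne := hQ _ hE.le
    rw [isingHalf_eq, ← hn, h5]
    refine ⟨?_, ?_⟩
    · refine mul_ne_zero (by exact_mod_cast hC.ne') (mul_ne_zero ?_ (Complex.exp_ne_zero _))
      simpa using hne
    · rw [norm_mul, norm_mul, hθ1, Complex.norm_real, Complex.norm_real,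
        Real.norm_of_nonneg hC.le, norm_norm]
      push_cast
      ring
  choose θ hθ using hex
  have hF : ∀ t : ℝ, 0 ≤ t → ∀ x : ℝ,
      IsingZ E J u₀ v₀ t x = 0 ↔ Real.cos (θ t x) = 0 := by
    intro t ht x
    obtain ⟨hne, heq⟩ := (hθ t ht).2.2.2.2 x
    have hre : (isingHalf E J u₀ v₀ u₀ t x).re =
        ‖isingHalf E J u₀ v₀ u₀ t x‖ * Real.cos (θ t x) := by
      conv_lhs => rw [heq]
      rw [Complex.re_ofReal_mul, Complex.exp_ofReal_mul_I_re]
    rw [isingZ_eq_isingHalf_add_conj E J u₀ v₀ u₀, Complex.add_conj, hre,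
      Complex.ofReal_eq_zero]
    simp [hne]
  have hG : Continuous (Function.uncurry fun t x : ℝ => isingHalf E J u₀ v₀ u₀ t x) := by
    unfold isingHalf Function.uncurry
    fun_prop
  refine ⟨fun t ht => ?_, ?_⟩
  · rw [hF t ht, (hθ t ht).2.2.2.1, Real.cos_eq_zero_iff]
    exact ⟨m, by rw [hm]; push_cast; ring⟩
  · obtain ⟨A, B, hAB⟩ := exists_isingZ_eq_exp_combination E J u₀ v₀
    rw [hm']
    exact exists_zero_motion m (fun t x => IsingZ E J u₀ v₀ t x) A B θ hAB
      (fun t ht x _ => hF t ht x) (fun t ht => (hθ t ht).1) (fun t ht => (hθ t ht).2.1)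
      (fun t ht => (hθ t ht).2.2.1) (fun t ht => by rw [(hθ t ht).2.2.2.1, hm])
      fun x _ => continuousOn_phase_param hG (fun t ht x => ((hθ t ht).2.2.2.2 x).1)
        (fun t ht x => ((hθ t ht).2.2.2.2 x).2) (fun t ht => (hθ t ht).1)
        (fun t ht => (hθ t ht).2.2.1) x
end

section
/- Suppose that n is even, that J is ferromagnetic, and let 0 < t < s. Let 0 < x_1(0) ≤ … ≤ x_{n/2}(0) ≤ π/2 and 0 < x_1(s) ≤ … ≤ x_{n/2}(s) ≤ π/2 be real numbers such that Z_{G,0}(x) = Z_{G,0}(0)·∏_{j=1}^{n/2}(sin²x_j(0) − sin²x)/sin²x_j(0) and Z_{G,s}(x) = Z_{G,s}(0)·∏_{j=1}^{n/2}(sin²x_j(s) − sin²x)/sin²x_j(s) for all x ∈ ℂ. Set y_j(0) := sin²x_j(0), y_j(s) := sin²x_j(s), and K(t,s) := Z_{G,s}(0)·sinh(t)/(Z_{G,0}(0)·sinh(s−t)). Then K(t,s) > 0, and for every real x with Z_{G,t}(x) = 0, writing y := sin²x, one has ∏_{j=1}^{n/2}(y_j(0) − y)/y_j(0) = −K(t,s)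 · ∏_{j=1}^{n/2}(y_j(s) − y)/y_j(s). -/
open scoped Real

/-- The product of two spins is `1` or `-1`. -/
lemma spin_mul_spin_eq (a b : Bool) : spin a * spin b = 1 ∨ spin a * spin b = -1 := by
  cases a <;> cases b <;> simp [spin]

/-- At zero field and real coupling the partition function is a positive real number. -/
lemma exists_pos_isingZ_zero {V : Type} [Fintype V] [DecidableEq V]
    (E : Finset (Sym2 V)) (J : Sym2 V → ℝ) (u₀ v₀ : V) (t : ℝ) :
    ∃ r : ℝ, 0 < r ∧ IsingZ E J u₀ v₀ t 0 = r := by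
  refine ⟨∑ σ : V → Bool, Real.exp
    (t * (spin (σ u₀) * spin (σ v₀)) + ∑ e ∈ E, J e * pairProd σ e), ?_, ?_⟩
  · exact Finset.sum_pos (fun σ _ => Real.exp_pos _) Finset.univ_nonempty
  · simp [IsingZ]

lemma sinh_mul_exp_mul_of_sign {ε : ℝ} (hε : ε = 1 ∨ ε = -1) (t s : ℂ) :
    Complex.sinh s * Complex.exp (t * ε)
      = Complex.sinh (s - t) + Complex.sinh t * Complex.exp (s * ε) := by
  rcases hε with rfl | rfl <;>
    simp only [Complex.ofReal_neg, Complex.ofReal_one, mul_neg, mul_one, Complex.sinh_sub,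
      ← Complex.cosh_add_sinh, Complex.cosh_neg, Complex.sinh_neg] <;> ring

/-- The partition function at coupling `t` interpolates between those at `0` and `s`. -/
lemma sinh_mul_isingZ {V : Type} [Fintype V] [DecidableEq V]
    (E : Finset (Sym2 V)) (J : Sym2 V → ℝ) (u₀ v₀ : V) (t s z : ℂ) :
    Complex.sinh s * IsingZ E J u₀ v₀ t z
      = Complex.sinh (s - t) * IsingZ E J u₀ v₀ 0 z
        + Complex.sinh t * IsingZ E J u₀ v₀ s z := by
  simp only [IsingZ, Finset.mul_sum, ← Finset.sum_add_distrib]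
  refine Finset.sum_congr rfl fun σ _ => ?_
  simp only [Complex.exp_add, zero_mul, Complex.exp_zero, one_mul]
  linear_combination
    Complex.exp ((∑ e ∈ E, J e * pairProd σ e : ℝ) : ℂ)
      * Complex.exp (Complex.I * z * ((∑ u, spin (σ u) : ℝ) : ℂ))
      * sinh_mul_exp_mul_of_sign (spin_mul_spin_eq (σ u₀) (σ v₀)) t s

theorem stmt7 {V : Type} [Fintype V] [DecidableEq V]
    (E : Finset (Sym2 V)) (J : Sym2 V → ℝ) (u₀ v₀ : V)
    (hE : s(u₀, v₀) ∈ E)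
    (hferro : ∀ e ∈ E, 0 ≤ J e)
    (n : ℕ) (hn : n = Fintype.card V) (heven : Even n)
    (t s : ℝ) (ht : 0 < t) (hts : t < s)
    (x0 xs : ℕ → ℝ)
    (hx0range : ∀ k ∈ Finset.Icc 1 (n / 2), 0 < x0 k ∧ x0 k ≤ π / 2)
    (hx0mono : ∀ k, 1 ≤ k → k < n / 2 → x0 k ≤ x0 (k + 1))
    (hxsrange : ∀ k ∈ Finset.Icc 1 (n / 2), 0 < xs k ∧ xs k ≤ π / 2)
    (hxsmono : ∀ k, 1 ≤ k → k < n / 2 → xs k ≤ xs (k + 1))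
    (hfac0 : ∀ z : ℂ, IsingZ E J u₀ v₀ 0 z
      = IsingZ E J u₀ v₀ 0 0 *
        ∏ j ∈ Finset.Icc 1 (n / 2),
          (((Real.sin (x0 j) ^ 2 : ℝ) : ℂ) - Complex.sin z ^ 2)
            / ((Real.sin (x0 j) ^ 2 : ℝ) : ℂ))
    (hfacs : ∀ z : ℂ, IsingZ E J u₀ v₀ s z
      = IsingZ E J u₀ v₀ s 0 *
        ∏ j ∈ Finset.Icc 1 (n / 2),
          (((Real.sin (xs j) ^ 2 : ℝ) : ℂ) - Complex.sin z ^ 2)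
            / ((Real.sin (xs j) ^ 2 : ℝ) : ℂ)) :
    ∃ K : ℝ, 0 < K ∧
      (K : ℂ) = IsingZ E J u₀ v₀ s 0 * ((Real.sinh t : ℝ) : ℂ)
        / (IsingZ E J u₀ v₀ 0 0 * ((Real.sinh (s - t) : ℝ) : ℂ)) ∧
      ∀ x : ℝ, IsingZ E J u₀ v₀ t x = 0 →
        ∏ j ∈ Finset.Icc 1 (n / 2),
            (Real.sin (x0 j) ^ 2 - Real.sin x ^ 2) / Real.sin (x0 j) ^ 2
          = -K * ∏ j ∈ Finset.Icc 1 (n / 2),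
              (Real.sin (xs j) ^ 2 - Real.sin x ^ 2) / Real.sin (xs j) ^ 2 := by
  obtain ⟨r0, hr0, hZ0⟩ := exists_pos_isingZ_zero E J u₀ v₀ 0
  obtain ⟨rs, hrs, hZs⟩ := exists_pos_isingZ_zero E J u₀ v₀ s
  rw [Complex.ofReal_zero] at hZ0
  have hsinht : 0 < Real.sinh t := Real.sinh_pos_iff.2 ht
  have hsinhst : 0 < Real.sinh (s - t) := Real.sinh_pos_iff.2 (sub_pos.2 hts)
  refine ⟨rs * Real.sinh t / (r0 * Real.sinh (s - t)), by positivity, ?_, fun x hx => ?_⟩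
  · rw [hZ0, hZs]
    push_cast
    rfl
  · have h := sinh_mul_isingZ E J u₀ v₀ t s x
    rw [hx, hfac0, hfacs, hZ0, hZs] at h
    have hreal : 0 = Real.sinh (s - t) * (r0 * ∏ j ∈ Finset.Icc 1 (n / 2),
          (Real.sin (x0 j) ^ 2 - Real.sin x ^ 2) / Real.sin (x0 j) ^ 2)
        + Real.sinh t * (rs * ∏ j ∈ Finset.Icc 1 (n / 2),
          (Real.sin (xs j) ^ 2 - Real.sin x ^ 2) / Real.sin (xs j) ^ 2) := by
      apply Complex.ofReal_injective
      push_cast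
      simpa using h
    field_simp at hreal ⊢
    linarith
end
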